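/- Thomson's principle (uniqueness of the minimizer): Let G=(V,E) be a finite network with positive conductances and let a ≠ z be vertices. Then there exists a unique flow I from a to z of strength 1 whose energy equals R_eff(a↔z) = inf{ E(θ) : θ a flow from a to z of strength 1 }; moreover every flow θ from a to z of strength 1 with θ ≠ I satisfies E(θ) > E(I), and I satisfies the cycle law. -/

import Mathlib

/-!
Thomson's principle: uniqueness of the energy-minimizing unit flow.

The finite network is a finite connected simple graph `G` with symmetric
conductances `c : V → V → ℝ`, positive on edges (and, by convention, zero on
non-adjacent pairs); resistances are `(c x y)⁻¹`.  A flow from `a` to `z` is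
an antisymmetric function `θ : V → V → ℝ` vanishing on non-adjacent pairs and
satisfying the node law away from `a, z`; since `θ` vanishes off edges, sums
over all vertices agree with sums over neighbours, and the energy
`∑_{e={x,y}∈E} r_e θ(x,y)²` equals `(1/2) * ∑ x, ∑ y, θ x y ^ 2 / c x y`.

A directed cycle is a closed walk `γ 0, γ 1, …, γ n = γ 0` with consecutive
vertices adjacent; `θ` satisfies the cycle law when
`∑ i < n, r_{γ i, γ (i+1)} θ(γ i, γ (i+1)) = 0` along every directed cycle.
-/

open Finset

variable {V : Type} [Fintype V] [DecidableEq V]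

/-- `θ` is a flow of strength 1 from `a` to `z` in `G`. -/
def IsUnitFlow (G : SimpleGraph V) (a z : V) (θ : V → V → ℝ) : Prop :=
  (∀ x y, θ x y = -θ y x) ∧
  (∀ x y, ¬G.Adj x y → θ x y = 0) ∧
  (∀ x, x ≠ a → x ≠ z → ∑ y, θ x y = 0) ∧
  (∑ y, θ a y = 1)

/-- The energy of a flow with respect to conductances `c`. -/
noncomputable def flowEnergy (c : V → V → ℝ) (θ : V → V → ℝ) : ℝ :=
  (1 / 2) * ∑ x, ∑ y, θ x y ^ 2 / c x y

/-- `θ` satisfies the cycle law: along every directed cycle the sum of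
`r_e θ(e⃗) = θ(e⃗)/c_e` vanishes. -/
def CycleLaw (G : SimpleGraph V) (c : V → V → ℝ) (θ : V → V → ℝ) : Prop :=
  ∀ (n : ℕ) (γ : ℕ → V), (∀ i < n, G.Adj (γ i) (γ (i + 1))) → γ n = γ 0 →
    ∑ i ∈ Finset.range n, θ (γ i) (γ (i + 1)) / c (γ i) (γ (i + 1)) = 0

/-!
The minimizer is the current `I = c · dh` of a potential `h` with `Δh = 1_a - 1_z`. The network
Laplacian `Δ` is symmetric and its kernel consists of functions constant on connected components,
which are orthogonal to `1_a - 1_z`, so such an `h` exists. Being `c` times a gradient, `I` obeys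
the cycle law and is orthogonal, for the energy inner product, to every circulation; hence
`E(θ) = E(I) + E(θ - I)` for every unit flow `θ`.
-/

open Matrix

section Laplacian

variable {ι R : Type*} [Fintype ι]

lemma sum_sum_sub_mul_of_antisymm [Ring R] (h : ι → R) {φ : ι → ι → R}
    (hφ : ∀ x y, φ x y = -φ y x) :
    ∑ x, ∑ y, (h x - h y) * φ x y = 2 * ∑ x, h x * ∑ y, φ x y := by
  have hswap : ∑ x, ∑ y, h y * φ x y = -∑ x, ∑ y, h x * φ x y := by
    rw [sum_comm]
    simp only [← sum_neg_distrib, ← mul_neg, ← hφ]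
  simp_rw [sub_mul, sum_sub_distrib, hswap, mul_sum, sub_neg_eq_add, two_mul, sum_add_distrib]

lemma sum_sum_eq_zero_of_antisymm [AddCommGroup R] [IsAddTorsionFree R] {φ : ι → ι → R}
    (hφ : ∀ x y, φ x y = -φ y x) : ∑ x, ∑ y, φ x y = 0 := by
  refine self_eq_neg.1 ?_
  calc
    ∑ x, ∑ y, φ x y = ∑ x, ∑ y, φ y x := sum_comm
    _ = -∑ x, ∑ y, φ x y := by simp only [← sum_neg_distrib, ← hφ]

lemma exists_mulVec_eq_of_vecMul_eq_zero_imp {κ : Type*} [Fintype κ] [Field R]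
    {A : Matrix ι κ R} {b : ι → R} (hb : ∀ g, g ᵥ* A = 0 → g ⬝ᵥ b = 0) : ∃ f, A *ᵥ f = b := by
  let B : (ι → R) →ₗ[R] (κ → R) →ₗ[R] R := dotProductBilin R R ∘ₗ A.vecMulLinear
  have hmem : (dotProductBilin R R).flip b ∈ B.ker.dualAnnihilator := by
    rw [Submodule.mem_dualAnnihilator]
    exact fun g hg ↦ hb g (dotProduct_eq_zero _ (LinearMap.congr_fun hg))
  rw [LinearMap.dualAnnihilator_ker_eq_range_flip] at hmem
  obtain ⟨f, hf⟩ := hmem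
  refine ⟨f, dotProduct_eq _ _ fun g ↦ ?_⟩
  have hfg : g ᵥ* A ⬝ᵥ f = g ⬝ᵥ b := LinearMap.congr_fun hf g
  rw [dotProduct_comm, dotProduct_mulVec, hfg, dotProduct_comm]

/-- The current `c dh` which Ohm's law assigns to the potential `h` in the network with conductance
matrix `C`; it flows from high to low potential. -/
def ohmCurrent [Ring R] (C : Matrix ι ι R) (h : ι → R) (x y : ι) : R :=
  C x y * (h x - h y)

/-- The Laplacian of the network with conductance matrix `C`, with the sign that makes it positive
semidefinite for nonnegative `C`. -/
def networkLaplacian [DecidableEq ι] [Ring R] (C : Matrix ι ι R) : Matrix ι ι R :=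
  diagonal (fun x ↦ ∑ y, C x y) - C

omit [Fintype ι] in
lemma ohmCurrent_antisymm [Ring R] {C : Matrix ι ι R} (hC : C.IsSymm) (h : ι → R) (x y : ι) :
    ohmCurrent C h x y = -ohmCurrent C h y x := by
  rw [ohmCurrent, ohmCurrent, hC.apply x y, ← mul_neg, neg_sub]

variable [DecidableEq ι]

lemma networkLaplacian_mulVec_apply [Ring R] (C : Matrix ι ι R) (h : ι → R) (x : ι) :
    (networkLaplacian C *ᵥ h) x = ∑ y, ohmCurrent C h x y := by
  rw [networkLaplacian, sub_mulVec, Pi.sub_apply, mulVec_diagonal, sum_mul]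
  simp only [ohmCurrent, mulVec, dotProduct, mul_sub, sum_sub_distrib]

lemma isSymm_networkLaplacian [Ring R] {C : Matrix ι ι R} (hC : C.IsSymm) :
    (networkLaplacian C).IsSymm :=
  (isSymm_diagonal _).sub hC

variable [Field R] [LinearOrder R] [IsStrictOrderedRing R] {C : Matrix ι ι R} {h : ι → R}

lemma eq_of_networkLaplacian_mulVec_eq_zero (hC : C.IsSymm) (hC₀ : ∀ x y, 0 ≤ C x y)
    (hh : networkLaplacian C *ᵥ h = 0) {x y : ι} (hxy : C x y ≠ 0) : h x = h y := by
  have hnonneg (x y : ι) : 0 ≤ (h x - h y) * ohmCurrent C h x y := by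
    rw [ohmCurrent, mul_left_comm]
    exact mul_nonneg (hC₀ x y) (mul_self_nonneg _)
  have hsum : ∑ x, ∑ y, (h x - h y) * ohmCurrent C h x y = 0 := by
    rw [sum_sum_sub_mul_of_antisymm h (ohmCurrent_antisymm hC h)]
    simp [← networkLaplacian_mulVec_apply, hh]
  rw [Fintype.sum_eq_zero_iff_of_nonneg fun x ↦ Fintype.sum_nonneg (hnonneg x)] at hsum
  have hx := congrFun hsum x
  rw [Pi.zero_apply, Fintype.sum_eq_zero_iff_of_nonneg (hnonneg x)] at hx
  simpa [ohmCurrent, hxy, sub_eq_zero] using congrFun hx y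

lemma eq_of_networkLaplacian_mulVec_eq_zero_of_reachable {G : SimpleGraph ι} (hC : C.IsSymm)
    (hC₀ : ∀ x y, 0 ≤ C x y) (hadj : ∀ x y, G.Adj x y → C x y ≠ 0)
    (hh : networkLaplacian C *ᵥ h = 0) {x y : ι} (hxy : G.Reachable x y) : h x = h y := by
  obtain ⟨p⟩ := hxy
  induction p with
  | nil => rfl
  | cons huv _ ih => exact (eq_of_networkLaplacian_mulVec_eq_zero hC hC₀ hh (hadj _ _ huv)).trans ih

lemma exists_networkLaplacian_mulVec_eq_single_sub_single {G : SimpleGraph ι} (hC : C.IsSymm)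
    (hC₀ : ∀ x y, 0 ≤ C x y) (hadj : ∀ x y, G.Adj x y → C x y ≠ 0) {a z : ι}
    (haz : G.Reachable a z) :
    ∃ h, networkLaplacian C *ᵥ h = Pi.single a 1 - Pi.single z 1 := by
  refine exists_mulVec_eq_of_vecMul_eq_zero_imp fun g hg ↦ ?_
  rw [← mulVec_transpose, (isSymm_networkLaplacian hC).eq] at hg
  rw [dotProduct_sub, dotProduct_single_one, dotProduct_single_one, sub_eq_zero]
  exact eq_of_networkLaplacian_mulVec_eq_zero_of_reachable hC hC₀ hadj hg haz

end Laplacian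

section EdgeConductance

variable {ι : Type*} {G : SimpleGraph ι} [DecidableRel G.Adj] {c : ι → ι → ℝ}

/-- The conductance matrix of the network `(G, c)`: the values of `c` on the edges of `G`, and zero
off the edges, where the values of `c` are arbitrary. -/
def edgeConductance (G : SimpleGraph ι) [DecidableRel G.Adj] (c : ι → ι → ℝ) : Matrix ι ι ℝ :=
  of fun x y ↦ if G.Adj x y then c x y else 0

lemma edgeConductance_of_adj {x y : ι} (hxy : G.Adj x y) : edgeConductance G c x y = c x y :=
  if_pos hxy

lemma edgeConductance_of_not_adj {x y : ι} (hxy : ¬G.Adj x y) : edgeConductance G c x y = 0 :=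
  if_neg hxy

lemma isSymm_edgeConductance (hsymm : ∀ x y, c x y = c y x) : (edgeConductance G c).IsSymm := by
  ext x y
  simp [edgeConductance, G.adj_comm x y, hsymm x y]

lemma edgeConductance_nonneg (hpos : ∀ x y, G.Adj x y → 0 < c x y) (x y : ι) :
    0 ≤ edgeConductance G c x y := by
  by_cases hxy : G.Adj x y
  · exact (edgeConductance_of_adj hxy).symm ▸ (hpos x y hxy).le
  · exact (edgeConductance_of_not_adj hxy).ge

lemma ohmCurrent_edgeConductance_div (hc : ∀ x y, G.Adj x y → c x y ≠ 0) (h : ι → ℝ) {x y : ι}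
    (hxy : G.Adj x y) : ohmCurrent (edgeConductance G c) h x y / c x y = h x - h y := by
  rw [ohmCurrent, edgeConductance_of_adj hxy, mul_div_cancel_left₀ _ (hc x y hxy)]

end EdgeConductance

section Flow

omit [DecidableEq V]

/-- A circulation, i.e. a flow of strength zero: an antisymmetric function on the edges of `G` which
satisfies the node law at every vertex. -/
structure IsCirculation (G : SimpleGraph V) (φ : V → V → ℝ) : Prop where
  antisymm : ∀ x y, φ x y = -φ y x
  eq_zero_of_not_adj : ∀ x y, ¬G.Adj x y → φ x y = 0
  sum_eq_zero : ∀ x, ∑ y, φ x y = 0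

variable {G : SimpleGraph V} {c : V → V → ℝ} {a z : V} {θ φ I : V → V → ℝ}

lemma IsUnitFlow.sum_sink (haz : a ≠ z) (hθ : IsUnitFlow G a z θ) : ∑ y, θ z y = -1 := by
  obtain ⟨hanti, -, hnode, hstrength⟩ := hθ
  have htotal := sum_sum_eq_zero_of_antisymm hanti
  rw [Fintype.sum_eq_add a z haz fun x hx ↦ hnode x hx.1 hx.2, hstrength] at htotal
  exact eq_neg_of_add_eq_zero_right htotal

lemma IsUnitFlow.isCirculation_sub (haz : a ≠ z) (hθ : IsUnitFlow G a z θ)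
    (hI : IsUnitFlow G a z I) : IsCirculation G (θ - I) where
  antisymm x y := by
    simp only [Pi.sub_apply]
    linarith [hθ.1 x y, hI.1 x y]
  eq_zero_of_not_adj x y hxy := by
    rw [Pi.sub_apply, Pi.sub_apply, hθ.2.1 x y hxy, hI.2.1 x y hxy, sub_zero]
  sum_eq_zero x := by
    simp only [Pi.sub_apply, sum_sub_distrib, sub_eq_zero]
    by_cases hxa : x = a
    · rw [hxa, hθ.2.2.2, hI.2.2.2]
    by_cases hxz : x = z
    · rw [hxz, hθ.sum_sink haz, hI.sum_sink haz]
    · rw [hθ.2.2.1 x hxa hxz, hI.2.2.1 x hxa hxz]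

lemma flowEnergy_pos (hpos : ∀ x y, G.Adj x y → 0 < c x y)
    (hφ : ∀ x y, ¬G.Adj x y → φ x y = 0) (hne : φ ≠ 0) : 0 < flowEnergy c φ := by
  have hnonneg (x y : V) : 0 ≤ φ x y ^ 2 / c x y := by
    by_cases hxy : G.Adj x y
    · exact div_nonneg (sq_nonneg _) (hpos x y hxy).le
    · simp [hφ x y hxy]
  obtain ⟨x, hx⟩ := Function.ne_iff.1 hne
  obtain ⟨y, hxy⟩ := Function.ne_iff.1 hx
  have hadj : G.Adj x y := not_not.1 fun hn ↦ hxy (hφ x y hn)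
  refine mul_pos one_half_pos (sum_pos' (fun x _ ↦ sum_nonneg fun y _ ↦ hnonneg x y)
    ⟨x, mem_univ x, sum_pos' (fun y _ ↦ hnonneg x y) ⟨y, mem_univ y, ?_⟩⟩)
  exact div_pos (sq_pos_of_ne_zero hxy) (hpos x y hadj)

variable [DecidableRel G.Adj] {h : V → ℝ}

omit [Fintype V] in
lemma cycleLaw_ohmCurrent (hc : ∀ x y, G.Adj x y → c x y ≠ 0) (h : V → ℝ) :
    CycleLaw G c (ohmCurrent (edgeConductance G c) h) := by
  intro n γ hγ hclosed
  calc
    ∑ i ∈ range n, ohmCurrent (edgeConductance G c) h (γ i) (γ (i + 1)) / c (γ i) (γ (i + 1)) =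
        ∑ i ∈ range n, (h (γ i) - h (γ (i + 1))) :=
      sum_congr rfl fun i hi ↦ ohmCurrent_edgeConductance_div hc h (hγ i (mem_range.1 hi))
    _ = 0 := by rw [sum_range_sub' (fun i ↦ h (γ i)), hclosed, sub_self]

lemma isUnitFlow_ohmCurrent [DecidableEq V] (hsymm : ∀ x y, c x y = c y x) (haz : a ≠ z)
    (hh : networkLaplacian (edgeConductance G c) *ᵥ h = Pi.single a 1 - Pi.single z 1) :
    IsUnitFlow G a z (ohmCurrent (edgeConductance G c) h) := by
  refine ⟨ohmCurrent_antisymm (isSymm_edgeConductance hsymm) h, fun x y hxy ↦ ?_,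
    fun x hxa hxz ↦ ?_, ?_⟩
  · rw [ohmCurrent, edgeConductance_of_not_adj hxy, zero_mul]
  · simp [← networkLaplacian_mulVec_apply, hh, hxa, hxz]
  · simp [← networkLaplacian_mulVec_apply, hh, haz]

lemma flowEnergy_ohmCurrent_add (hc : ∀ x y, G.Adj x y → c x y ≠ 0) (h : V → ℝ)
    (hφ : IsCirculation G φ) :
    flowEnergy c (ohmCurrent (edgeConductance G c) h + φ) =
      flowEnergy c (ohmCurrent (edgeConductance G c) h) + flowEnergy c φ := by
  set I := ohmCurrent (edgeConductance G c) h with hI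
  have hcross : ∑ x, ∑ y, (h x - h y) * φ x y = 0 := by
    simp [sum_sum_sub_mul_of_antisymm h hφ.antisymm, hφ.sum_eq_zero]
  have hexpand (x y : V) : (I + φ) x y ^ 2 / c x y =
      I x y ^ 2 / c x y + φ x y ^ 2 / c x y + 2 * ((h x - h y) * φ x y) := by
    by_cases hxy : G.Adj x y
    · rw [← ohmCurrent_edgeConductance_div hc h hxy, ← hI, Pi.add_apply, Pi.add_apply]
      ring
    · simp [hφ.eq_zero_of_not_adj x y hxy]
  simp_rw [flowEnergy, hexpand, sum_add_distrib, ← mul_sum, hcross]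
  ring

lemma flowEnergy_ohmCurrent_lt (hpos : ∀ x y, G.Adj x y → 0 < c x y) (haz : a ≠ z)
    (hI : IsUnitFlow G a z (ohmCurrent (edgeConductance G c) h)) (hθ : IsUnitFlow G a z θ)
    (hne : θ ≠ ohmCurrent (edgeConductance G c) h) :
    flowEnergy c (ohmCurrent (edgeConductance G c) h) < flowEnergy c θ := by
  have hcirc := hθ.isCirculation_sub haz hI
  rw [← add_sub_cancel (ohmCurrent (edgeConductance G c) h) θ,
    flowEnergy_ohmCurrent_add (fun x y hxy ↦ (hpos x y hxy).ne') h hcirc]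
  exact lt_add_of_pos_right _ (flowEnergy_pos hpos hcirc.eq_zero_of_not_adj (sub_ne_zero.2 hne))

end Flow

omit [DecidableEq V] in
theorem thomson_unique_minimizer_general (G : SimpleGraph V) (c : V → V → ℝ)
    (hsymm : ∀ x y, c x y = c y x) (hpos : ∀ x y, G.Adj x y → 0 < c x y) (a z : V) (haz : a ≠ z)
    (hreach : G.Reachable a z) :
    ∃ I : V → V → ℝ,
      IsUnitFlow G a z I ∧
      IsLeast {E : ℝ | ∃ θ : V → V → ℝ, IsUnitFlow G a z θ ∧ E = flowEnergy c θ}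
        (flowEnergy c I) ∧
      (∀ θ : V → V → ℝ, IsUnitFlow G a z θ → θ ≠ I → flowEnergy c I < flowEnergy c θ) ∧
      CycleLaw G c I := by
  classical
  have hc (x y : V) (hxy : G.Adj x y) : c x y ≠ 0 := (hpos x y hxy).ne'
  obtain ⟨h, hh⟩ := exists_networkLaplacian_mulVec_eq_single_sub_single
    (isSymm_edgeConductance hsymm) (edgeConductance_nonneg hpos)
    (fun x y hxy ↦ (edgeConductance_of_adj hxy).trans_ne (hc x y hxy)) hreach
  have hI := isUnitFlow_ohmCurrent hsymm haz hh
  have hlt (θ : V → V → ℝ) := flowEnergy_ohmCurrent_lt (θ := θ) hpos haz hI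
  refine ⟨_, hI, ⟨⟨_, hI, rfl⟩, ?_⟩, hlt, cycleLaw_ohmCurrent hc h⟩
  rintro _ ⟨θ, hθ, rfl⟩
  obtain rfl | hne := eq_or_ne θ (ohmCurrent (edgeConductance G c) h)
  exacts [le_rfl, (hlt θ hθ hne).le]

/-- **Thomson's principle (uniqueness of the minimizer)**: there is a unique
unit flow `I` from `a` to `z` whose energy equals
`R_eff(a↔z) = inf {E(θ) : θ a unit flow from a to z}`; every other unit flow
has strictly larger energy, and `I` satisfies the cycle law. -/
theorem thomson_unique_minimizer (G : SimpleGraph V) (hG : G.Connected)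
    (c : V → V → ℝ) (hsymm : ∀ x y, c x y = c y x)
    (hpos : ∀ x y, G.Adj x y → 0 < c x y)
    (a z : V) (haz : a ≠ z) :
    ∃ I : V → V → ℝ,
      IsUnitFlow G a z I ∧
      IsLeast {E : ℝ | ∃ θ : V → V → ℝ, IsUnitFlow G a z θ ∧ E = flowEnergy c θ}
        (flowEnergy c I) ∧
      (∀ θ : V → V → ℝ, IsUnitFlow G a z θ → θ ≠ I →
        flowEnergy c I < flowEnergy c θ) ∧
      CycleLaw G c I :=
  thomson_unique_minimizer_general G c hsymm hpos a z haz (hG.preconnected a z)
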